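/- (Semi-discrete entropy inequality for entropy stable fluxes.) Let m ∈ ℕ, Δx > 0, and let η : ℝ^m → ℝ be differentiable. Let u_{i−1}, u_i, u_{i+1} : ℝ → ℝ^m with u_i differentiable, and set v_j(t) = ∇η(u_j(t)) for j ∈ {i−1, i, i+1}. Suppose for every t there are ψ_{i−1}(t), ψ_i(t), ψ_{i+1}(t) ∈ ℝ, entropy conservative fluxes F*₊(t), F*₋(t) ∈ ℝ^m satisfying ⟨v_{i+1}(t) − v_i(t), F*₊(t)⟩ = ψ_{i+1}(t) − ψ_i(t) and ⟨v_i(t) − v_{i−1}(t), F*₋(t)⟩ = ψ_i(t) − ψ_{i−1}(t), and symmetric positive semidefinite matrices D₊(t), D₋(t). Define F̂₊ = F*₊ − ½ D₊ (v_{i+1} − v_i), F̂₋ = F*₋ − ½ D₋ (v_i − v_{i−1}), q̂₊ = q*₊ − ½ ⟨(v_i + v_{i+1})/2, D₊ (v_{i+1} − v_i)⟩, q̂₋ = q*₋ − ½ ⟨(v_{i−1} + v_i)/2, D₋ (v_i − v_{i−1})⟩, where q*_± are the numerical entropy fluxes of F*_±. If u_i solves the semi-discrete scheme u_i′(t) =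 −(F̂₊(t) − F̂₋(t))/Δx, then for every t, d/dt [η(u_i(t))] + (q̂₊(t) − q̂₋(t))/Δx ≤ 0. -/

import Mathlib

/-!
Both numerical entropy fluxes can be compared with a quantity of the central cell alone. Since
`⟨(v_L + v_R)/2, F⟩ = ⟨v_L, F⟩ + ½ ⟨Δv, F⟩ = ⟨v_R, F⟩ - ½ ⟨Δv, F⟩`, the entropy stability condition
`⟨Δv, F⟩ ≤ Δψ` gives `⟨v_R, F⟩ - ψ_R ≤ q ≤ ⟨v_L, F⟩ - ψ_L`. Hence
`q₊ - q₋ ≤ ⟨v_i, F₊ - F₋⟩`, which by the scheme and the chain rule is `-Δx · d/dt η(u_i)`.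
Subtracting `½ D Δv` from a conservative flux makes it stable because `⟨Δv, D Δv⟩ ≥ 0`, and the flux
`q̂` is the numerical entropy flux of `F̂` itself.
-/

section NumericalFlux

variable {V E : Type*} [AddCommGroup V] [Module ℝ V] [AddCommGroup E] [Module ℝ E]

/-- Tadmor's condition `⟨v_R - v_L, F⟩ = ψ_R - ψ_L` for an entropy conservative flux `F`. The
pairing `B` of entropy variables with fluxes is a parameter, so that entropy variables may be
gradients or elements of the dual space. -/
def IsEntropyConservative (B : V →ₗ[ℝ] E →ₗ[ℝ] ℝ) (vL vR : V) (ψL ψR : ℝ) (F : E) : Prop :=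
  B (vR - vL) F = ψR - ψL

/-- Tadmor's condition `⟨v_R - v_L, F⟩ ≤ ψ_R - ψ_L` for an entropy stable flux `F`. -/
def IsEntropyStable (B : V →ₗ[ℝ] E →ₗ[ℝ] ℝ) (vL vR : V) (ψL ψR : ℝ) (F : E) : Prop :=
  B (vR - vL) F ≤ ψR - ψL

/-- The numerical entropy flux `⟨(v_L + v_R)/2, F⟩ - (ψ_L + ψ_R)/2` of a numerical flux `F`, which
is not required to be entropy conservative. -/
noncomputable def numericalEntropyFlux (B : V →ₗ[ℝ] E →ₗ[ℝ] ℝ) (vL vR : V) (ψL ψR : ℝ) (F : E) :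
    ℝ :=
  B (midpoint ℝ vL vR) F - (ψL + ψR) / 2

variable {B : V →ₗ[ℝ] E →ₗ[ℝ] ℝ} {vL vR : V} {ψL ψR : ℝ} {F : E}

theorem IsEntropyConservative.isEntropyStable_sub_smul (hF : IsEntropyConservative B vL vR ψL ψR F)
    {c : ℝ} (hc : 0 ≤ c) {d : E} (hd : 0 ≤ B (vR - vL) d) :
    IsEntropyStable B vL vR ψL ψR (F - c • d) :=
  calc B (vR - vL) (F - c • d) = ψR - ψL - c * B (vR - vL) d := by
        rw [map_sub, map_smul, hF, smul_eq_mul]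
    _ ≤ ψR - ψL := sub_le_self _ (mul_nonneg hc hd)

theorem numericalEntropyFlux_sub_smul (B : V →ₗ[ℝ] E →ₗ[ℝ] ℝ) (vL vR : V) (ψL ψR : ℝ) (F : E)
    (c : ℝ) (d : E) :
    numericalEntropyFlux B vL vR ψL ψR (F - c • d) =
      numericalEntropyFlux B vL vR ψL ψR F - c * B (midpoint ℝ vL vR) d := by
  simp only [numericalEntropyFlux, map_sub, map_smul, smul_eq_mul]
  ring

theorem numericalEntropyFlux_eq_left (B : V →ₗ[ℝ] E →ₗ[ℝ] ℝ) (vL vR : V) (ψL ψR : ℝ) (F : E) :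
    numericalEntropyFlux B vL vR ψL ψR F =
      B vL F - ψL + (B (vR - vL) F - (ψR - ψL)) / 2 := by
  simp only [numericalEntropyFlux, midpoint_eq_smul_add, invOf_eq_inv, map_smul, map_add, map_sub,
    LinearMap.smul_apply, LinearMap.add_apply, LinearMap.sub_apply, smul_eq_mul]
  ring

theorem numericalEntropyFlux_eq_right (B : V →ₗ[ℝ] E →ₗ[ℝ] ℝ) (vL vR : V) (ψL ψR : ℝ) (F : E) :
    numericalEntropyFlux B vL vR ψL ψR F =
      B vR F - ψR - (B (vR - vL) F - (ψR - ψL)) / 2 := by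
  rw [numericalEntropyFlux_eq_left, map_sub, LinearMap.sub_apply]
  ring

theorem IsEntropyStable.numericalEntropyFlux_le (hF : IsEntropyStable B vL vR ψL ψR F) :
    numericalEntropyFlux B vL vR ψL ψR F ≤ B vL F - ψL := by
  rw [IsEntropyStable] at hF
  linarith [numericalEntropyFlux_eq_left B vL vR ψL ψR F]

theorem IsEntropyStable.le_numericalEntropyFlux (hF : IsEntropyStable B vL vR ψL ψR F) :
    B vR F - ψR ≤ numericalEntropyFlux B vL vR ψL ψR F := by
  rw [IsEntropyStable] at hF
  linarith [numericalEntropyFlux_eq_right B vL vR ψL ψR F]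

theorem IsEntropyStable.numericalEntropyFlux_sub_le {vm vi vp : V} {ψm ψi ψp : ℝ} {Fm Fp : E}
    (hFm : IsEntropyStable B vm vi ψm ψi Fm) (hFp : IsEntropyStable B vi vp ψi ψp Fp) :
    numericalEntropyFlux B vi vp ψi ψp Fp - numericalEntropyFlux B vm vi ψm ψi Fm ≤
      B vi (Fp - Fm) := by
  rw [map_sub]
  linarith [hFp.numericalEntropyFlux_le, hFm.le_numericalEntropyFlux]

end NumericalFlux

theorem semidiscrete_entropy_inequality_general {V E : Type*} [AddCommGroup V] [Module ℝ V]
    [NormedAddCommGroup E] [NormedSpace ℝ E] {B : V →ₗ[ℝ] E →ₗ[ℝ] ℝ} {Δx : ℝ} (hΔx : 0 < Δx)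
    {η : E → ℝ} {u : ℝ → E} {t : ℝ} {vm vi vp : V} {ψm ψi ψp : ℝ} {Fm Fp : E}
    (hη : DifferentiableAt ℝ η (u t)) (hvi : ∀ w, fderiv ℝ η (u t) w = B vi w)
    (hFm : IsEntropyStable B vm vi ψm ψi Fm) (hFp : IsEntropyStable B vi vp ψi ψp Fp)
    (hu : HasDerivAt u (-Δx⁻¹ • (Fp - Fm)) t) :
    deriv (fun s => η (u s)) t +
      (numericalEntropyFlux B vi vp ψi ψp Fp - numericalEntropyFlux B vm vi ψm ψi Fm) / Δx ≤ 0 := by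
  have entropy_rate : deriv (fun s => η (u s)) t = -(B vi (Fp - Fm) / Δx) := by
    have chain_rule := (hη.hasFDerivAt.comp_hasDerivAt t hu).deriv
    rw [hvi, map_smul, smul_eq_mul, neg_mul, inv_mul_eq_div] at chain_rule
    exact chain_rule
  rw [entropy_rate, neg_add_nonpos_iff]
  gcongr
  exact hFm.numericalEntropyFlux_sub_le hFp

section Coordinates

variable {ι : Type*} [Fintype ι]

theorem linearMap_apply_eq_dotProductBilin {R : Type*} [CommSemiring R] [DecidableEq ι]
    (f : (ι → R) →ₗ[R] R) (w : ι → R) :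
    f w = dotProductBilin R R (fun i => f (Pi.single i 1)) w :=
  (LinearMap.congr_fun ((dotProductEquiv R ι).apply_symm_apply f) w).symm

theorem dotProductBilin_midpoint_apply (a b w : ι → ℝ) :
    dotProductBilin ℝ ℝ (midpoint ℝ a b) w = ∑ i, (a i + b i) / 2 * w i := by
  refine Finset.sum_congr rfl fun i _ => ?_
  rw [pi_midpoint_apply, midpoint_eq_smul_add, invOf_eq_inv, smul_eq_mul, inv_mul_eq_div]

theorem numericalEntropyFlux_dotProductBilin_sub_smul (a b : ι → ℝ) (ψa ψb : ℝ) (F : ι → ℝ)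
    (c : ℝ) (d : ι → ℝ) :
    numericalEntropyFlux (dotProductBilin ℝ ℝ) a b ψa ψb (F - c • d) =
      ∑ i, (a i + b i) / 2 * F i - (ψa + ψb) / 2 - c * ∑ i, (a i + b i) / 2 * d i := by
  rw [numericalEntropyFlux_sub_smul, numericalEntropyFlux, dotProductBilin_midpoint_apply,
    dotProductBilin_midpoint_apply]

end Coordinates

/-- Semi-discrete entropy inequality for entropy stable fluxes:
if `u_i` solves `u_i' = -(F̂₊ - F̂₋)/Δx` with `F̂_± = F*_± - ½ D_± Δv_±`, `D_±`
symmetric positive semidefinite and `F*_±` entropy conservative, then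
`d/dt η(u_i) + (q̂₊ - q̂₋)/Δx ≤ 0`.  Here `v = ∇η` componentwise. -/
theorem semidiscrete_entropy_inequality (m : ℕ) (Δx : ℝ) (hΔx : 0 < Δx)
    (η : (Fin m → ℝ) → ℝ) (hη : Differentiable ℝ η)
    (um ui up : ℝ → (Fin m → ℝ)) (hui : Differentiable ℝ ui)
    (v : (Fin m → ℝ) → (Fin m → ℝ))
    (hv : ∀ x l, v x l = fderiv ℝ η x (Pi.single l 1))
    (ψm ψi ψp : ℝ → ℝ) (Fsp Fsm : ℝ → (Fin m → ℝ))
    (hFp : ∀ t, ∑ l, (v (up t) l - v (ui t) l) * Fsp t l = ψp t - ψi t)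
    (hFm : ∀ t, ∑ l, (v (ui t) l - v (um t) l) * Fsm t l = ψi t - ψm t)
    (Dp Dm : ℝ → Matrix (Fin m) (Fin m) ℝ)
    (hDpsymm : ∀ t, (Dp t).IsSymm) (hDmsymm : ∀ t, (Dm t).IsSymm)
    (hDppsd : ∀ t (x : Fin m → ℝ), 0 ≤ ∑ l, x l * (Dp t).mulVec x l)
    (hDmpsd : ∀ t (x : Fin m → ℝ), 0 ≤ ∑ l, x l * (Dm t).mulVec x l)
    (qsp qsm : ℝ → ℝ)
    (hqsp : ∀ t, qsp t = (∑ l, ((v (ui t) l + v (up t) l) / 2) * Fsp t l) - (ψi t + ψp t) / 2)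
    (hqsm : ∀ t, qsm t = (∑ l, ((v (um t) l + v (ui t) l) / 2) * Fsm t l) - (ψm t + ψi t) / 2)
    (Fhp Fhm : ℝ → (Fin m → ℝ))
    (hFhp : ∀ t, Fhp t = Fsp t - (1/2 : ℝ) • (Dp t).mulVec (v (up t) - v (ui t)))
    (hFhm : ∀ t, Fhm t = Fsm t - (1/2 : ℝ) • (Dm t).mulVec (v (ui t) - v (um t)))
    (qhp qhm : ℝ → ℝ)
    (hqhp : ∀ t, qhp t = qsp t -
      (1/2) * ∑ l, ((v (ui t) l + v (up t) l) / 2) * (Dp t).mulVec (v (up t) - v (ui t)) l)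
    (hqhm : ∀ t, qhm t = qsm t -
      (1/2) * ∑ l, ((v (um t) l + v (ui t) l) / 2) * (Dm t).mulVec (v (ui t) - v (um t)) l)
    (hscheme : ∀ t, deriv ui t = -(Δx)⁻¹ • (Fhp t - Fhm t)) :
    ∀ t, deriv (fun s => η (ui s)) t + (qhp t - qhm t) / Δx ≤ 0 := by
  intro t
  have gradient (w : Fin m → ℝ) : fderiv ℝ η (ui t) w = dotProductBilin ℝ ℝ (v (ui t)) w := by
    rw [funext (hv (ui t))]
    exact linearMap_apply_eq_dotProductBilin (fderiv ℝ η (ui t)).toLinearMap w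
  have conservative_p : IsEntropyConservative (dotProductBilin ℝ ℝ) (v (ui t)) (v (up t))
      (ψi t) (ψp t) (Fsp t) := hFp t
  have conservative_m : IsEntropyConservative (dotProductBilin ℝ ℝ) (v (um t)) (v (ui t))
      (ψm t) (ψi t) (Fsm t) := hFm t
  have stable_p := conservative_p.isEntropyStable_sub_smul one_half_pos.le (hDppsd t _)
  have stable_m := conservative_m.isEntropyStable_sub_smul one_half_pos.le (hDmpsd t _)
  have scheme : HasDerivAt ui (-Δx⁻¹ • (Fhp t - Fhm t)) t := hscheme t ▸ (hui t).hasDerivAt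
  rw [hFhp, hFhm] at scheme
  rw [hqhp, hqhm, hqsp, hqsm, ← numericalEntropyFlux_dotProductBilin_sub_smul,
    ← numericalEntropyFlux_dotProductBilin_sub_smul]
  exact semidiscrete_entropy_inequality_general hΔx (hη _) gradient stable_m stable_p scheme
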